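/- Let α₁,…,αₙ and x₁,…,xₙ be sequences of nonnegative real numbers, and let p > 1. Then the sum over all permutations σ in the symmetric group Sₙ of (α_{σ(1)}x₁ + ⋯ + α_{σ(n)}xₙ)^p is at most (n-1)!·(α₁+⋯+αₙ)^p·(x₁^p+⋯+xₙ^p). -/

import Mathlib

open scoped BigOperators ENNReal

/-- The `ℓ^p` norm of a vector in `ℝⁿ`, for `p ∈ [1, ∞]`. -/
noncomputable def vecPNorm {n : ℕ} (p : ℝ≥0∞) (x : Fin n → ℝ) : ℝ :=
  if p = ∞ then ⨆ i, |x i| else (∑ i, |x i| ^ p.toReal) ^ (1 / p.toReal)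

/-- The operator norm of a matrix acting on `(ℝⁿ, ‖·‖_p)`,
    i.e. `sup_{x ≠ 0} ‖Ax‖_p / ‖x‖_p`. -/
noncomputable def matPNorm {n : ℕ} (p : ℝ≥0∞) (A : Matrix (Fin n) (Fin n) ℝ) : ℝ :=
  sSup {r : ℝ | ∃ x : Fin n → ℝ, x ≠ 0 ∧ r = vecPNorm p (A.mulVec x) / vecPNorm p x}

/-- The circulant matrix `A(n, a, b)` with `a` on the diagonal and `b` elsewhere. -/
def circA (n : ℕ) (a b : ℝ) : Matrix (Fin n) (Fin n) ℝ :=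
  Matrix.of fun i j => if i = j then a else b

theorem sum_perm_apply_aux (n : ℕ) (α : Fin n → ℝ) (i : Fin n) :
    ∑ σ : Equiv.Perm (Fin n), α (σ i) = (Nat.factorial (n - 1) : ℝ) * ∑ j, α j := by
  have hc : ∀ j : Fin n, ∑ σ : Equiv.Perm (Fin n), α (σ j) =
      ∑ σ : Equiv.Perm (Fin n), α (σ i) := by
    intro j
    refine Fintype.sum_equiv (Equiv.mulRight (Equiv.swap i j)) _ _ ?_
    intro σ
    simp
  have h1 : ∑ j : Fin n, ∑ σ : Equiv.Perm (Fin n), α (σ j) =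
      (n : ℝ) * ∑ σ : Equiv.Perm (Fin n), α (σ i) := by
    rw [Finset.sum_congr rfl (fun j _ => hc j)]
    simp
  have h2 : ∑ j : Fin n, ∑ σ : Equiv.Perm (Fin n), α (σ j) =
      (Nat.factorial n : ℝ) * ∑ j, α j := by
    rw [Finset.sum_comm, Finset.sum_congr rfl (fun σ _ => Equiv.sum_comp σ α)]
    simp [Fintype.card_perm]
  have hn : 0 < n := i.pos
  have hn' : (n : ℝ) ≠ 0 := by positivity
  have h3 : (Nat.factorial n : ℝ) = n * (Nat.factorial (n - 1) : ℝ) := by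
    exact_mod_cast (Nat.mul_factorial_pred hn.ne').symm
  apply mul_left_cancel₀ hn'
  rw [← h1, h2, h3, mul_assoc]

theorem stmt_0 (n : ℕ) (α x : Fin n → ℝ) (hα : ∀ i, 0 ≤ α i) (hx : ∀ i, 0 ≤ x i)
    (p : ℝ) (hp : 1 < p) :
    ∑ σ : Equiv.Perm (Fin n), (∑ i, α (σ i) * x i) ^ p ≤
      (Nat.factorial (n - 1) : ℝ) * (∑ i, α i) ^ p * ∑ i, x i ^ p := by
  have hS0 : 0 ≤ ∑ i, α i := Finset.sum_nonneg (fun i _ => hα i)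
  have hp0 : p ≠ 0 := by linarith
  rcases hS0.eq_or_lt with hS | hS
  · have h0 : ∀ i, α i = 0 := by
      intro i
      exact (Finset.sum_eq_zero_iff_of_nonneg (fun i _ => hα i)).1 hS.symm i (Finset.mem_univ i)
    simp [h0, Real.zero_rpow hp0]
  · have key : ∀ σ : Equiv.Perm (Fin n), (∑ i, α (σ i) * x i) ^ p ≤
        (∑ i, α i) ^ p * ∑ i, α (σ i) / (∑ i, α i) * x i ^ p := by
      intro σ
      have hJ := Real.rpow_arith_mean_le_arith_mean_rpow Finset.univ
        (fun i => α (σ i) / (∑ i, α i)) x (fun i _ => div_nonneg (hα _) hS0)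
        (by rw [← Finset.sum_div, Equiv.sum_comp σ α, div_self hS.ne'])
        (fun i _ => hx i) hp.le
      have he : ∑ i, α (σ i) * x i =
          (∑ i, α i) * ∑ i, α (σ i) / (∑ i, α i) * x i := by
        rw [Finset.mul_sum]
        refine Finset.sum_congr rfl (fun i _ => ?_)
        field_simp
      rw [he, Real.mul_rpow hS0 (Finset.sum_nonneg
        (fun i _ => mul_nonneg (div_nonneg (hα _) hS0) (hx i)))]
      exact mul_le_mul_of_nonneg_left hJ (Real.rpow_nonneg hS0 p)
    refine (Finset.sum_le_sum (fun σ _ => key σ)).trans (le_of_eq ?_)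
    rw [← Finset.mul_sum, Finset.sum_comm]
    have h4 : ∀ i, ∑ σ : Equiv.Perm (Fin n), α (σ i) / (∑ i, α i) * x i ^ p =
        (Nat.factorial (n - 1) : ℝ) * x i ^ p := by
      intro i
      rw [← Finset.sum_mul, ← Finset.sum_div, sum_perm_apply_aux, mul_div_cancel_right₀ _ hS.ne']
    rw [Finset.sum_congr rfl (fun i _ => h4 i), ← Finset.mul_sum]
    ring
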